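/- Let Q ∈ L²_unif(ℝ), τ ∈ L¹_unif(ℝ), K := 2(‖Q‖_{L²_unif(ℝ)} + ‖τ‖_{L¹_unif(ℝ)}), and for u ∈ H¹(ℝ) define t[u] := ∫_ℝ |u'(x)|² dx − ∫_ℝ Q(x)( conj(u'(x)) u(x) + conj(u(x)) u'(x) ) dx + ∫_ℝ τ(x) |u(x)|² dx. Then for every ε ∈ (0,1] and every u ∈ H¹(ℝ): Re t[u] ≥ (1 − Kε) ‖u'‖²_{L²(ℝ)} − 4 K ε^{−3} ‖u‖²_{L²(ℝ)}. -/

import Mathlib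

open MeasureTheory

/-- The Stepanov `L²_unif` norm: `(sup_t ∫_t^{t+1} |Q|²)^{1/2}`. -/
noncomputable def stepL2 (Q : ℝ → ℂ) : ℝ :=
  Real.sqrt (⨆ t : ℝ, ∫ s in t..(t + 1), ‖Q s‖ ^ 2)

/-- The Stepanov `L¹_unif` norm: `sup_t ∫_t^{t+1} |τ|`. -/
noncomputable def stepL1 (τ : ℝ → ℂ) : ℝ :=
  ⨆ t : ℝ, ∫ s in t..(t + 1), ‖τ s‖

/-- Membership in the Stepanov space `L²_unif(ℝ)`: locally square integrable with
finite Stepanov norm. -/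
def InStepL2 (Q : ℝ → ℂ) : Prop :=
  AEStronglyMeasurable Q volume ∧
  LocallyIntegrable (fun s => ‖Q s‖ ^ 2) volume ∧
  BddAbove (Set.range fun t : ℝ => ∫ s in t..(t + 1), ‖Q s‖ ^ 2)

/-- Membership in the Stepanov space `L¹_unif(ℝ)`: locally integrable with
finite Stepanov norm. -/
def InStepL1 (τ : ℝ → ℂ) : Prop :=
  LocallyIntegrable τ volume ∧
  BddAbove (Set.range fun t : ℝ => ∫ s in t..(t + 1), ‖τ s‖)

/-- `u ∈ H¹(ℝ)` with derivative `u'`: `u` is absolutely continuous with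
`u x = u 0 + ∫_0^x u'`, and both `u` and `u'` are square integrable. -/
def InH1 (u u' : ℝ → ℂ) : Prop :=
  LocallyIntegrable u' volume ∧
  (∀ x : ℝ, u x = u 0 + ∫ s in (0:ℝ)..x, u' s) ∧
  MemLp u 2 volume ∧ MemLp u' 2 volume

/-- The constant `K = 2(‖Q‖_{L²_unif} + ‖τ‖_{L¹_unif})`. -/
noncomputable def Kc (Q τ : ℝ → ℂ) : ℝ := 2 * (stepL2 Q + stepL1 τ)

/-- The sesquilinear form `t[u] = ‖u'‖² - ∫ Q (conj(u')u + conj(u)u') + ∫ τ|u|²`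
associated with the Schrödinger operator with potential `q = Q' + τ`. -/
noncomputable def tform (Q τ u u' : ℝ → ℂ) : ℂ :=
  (Complex.ofReal (∫ x : ℝ, ‖u' x‖ ^ 2))
    - (∫ x : ℝ, Q x * ((starRingEnd ℂ) (u' x) * u x + (starRingEnd ℂ) (u x) * u' x))
    + ∫ x : ℝ, τ x * (‖u x‖ : ℂ) ^ 2

lemma aux_cs (v : ℝ → ℝ) (c d : ℝ) (hcd : c < d) (h1 : IntervalIntegrable v volume c d)
    (h2 : IntervalIntegrable (fun s => v s ^ 2) volume c d) :
    (∫ s in c..d, v s) ^ 2 ≤ (d - c) * ∫ s in c..d, v s ^ 2 := by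
  set S := ∫ s in c..d, v s with hS
  have hpos : 0 < d - c := sub_pos.2 hcd
  have h0 : 0 ≤ ∫ s in c..d, (v s - S / (d - c)) ^ 2 :=
    intervalIntegral.integral_nonneg hcd.le (fun s _ => sq_nonneg _)
  have he : (∫ s in c..d, (v s - S / (d - c)) ^ 2)
      = (∫ s in c..d, v s ^ 2) - (2 * (S / (d - c))) * S + (d - c) * (S / (d - c)) ^ 2 := by
    have : (fun s => (v s - S / (d - c)) ^ 2)
        = fun s => (v s ^ 2 - (2 * (S / (d - c))) * v s) + (S / (d - c)) ^ 2 := by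
      funext s; ring
    rw [this, intervalIntegral.integral_add (h2.sub (h1.const_mul _)) (by simp),
      intervalIntegral.integral_sub h2 (h1.const_mul _), intervalIntegral.integral_const_mul]
    simp [hS]
  rw [he] at h0
  have h3 : (∫ s in c..d, v s ^ 2) - (2 * (S / (d - c))) * S + (d - c) * (S / (d - c)) ^ 2
      = (∫ s in c..d, v s ^ 2) - S ^ 2 / (d - c) := by field_simp; ring
  rw [h3] at h0
  have h4 : S ^ 2 / (d - c) ≤ ∫ s in c..d, v s ^ 2 := by linarith
  rw [div_le_iff₀ hpos] at h4
  linarith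

lemma sq_int {u : ℝ → ℂ} (h : MemLp u 2 volume) : Integrable (fun x => ‖u x‖ ^ 2) volume := by
  simpa using h.integrable_norm_pow (by norm_num)

lemma aux_sup {u u' : ℝ → ℂ} (hu : InH1 u u') (c d x : ℝ) (hcd : c < d)
    (hx : x ∈ Set.Icc c d) :
    (d - c) * ‖u x‖ ^ 2 ≤ 2 * (∫ s in c..d, ‖u s‖ ^ 2)
      + 2 * (d - c) ^ 2 * ∫ s in c..d, ‖u' s‖ ^ 2 := by
  obtain ⟨hl, hF, hm, hm'⟩ := hu
  have hi : ∀ a b, IntervalIntegrable u' volume a b := fun a b =>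
    (hl.integrableOn_isCompact isCompact_uIcc).intervalIntegrable
  have hA : IntervalIntegrable (fun s => ‖u' s‖ ^ 2) volume c d := (sq_int hm').intervalIntegrable
  have hB : IntervalIntegrable (fun s => ‖u s‖ ^ 2) volume c d := (sq_int hm).intervalIntegrable
  have hcs := aux_cs (fun s => ‖u' s‖) c d hcd (hi c d).norm hA
  set S := ∫ s in c..d, ‖u' s‖ with hS
  set A := ∫ s in c..d, ‖u' s‖ ^ 2 with hAd
  have hpt : ∀ y ∈ Set.Icc c d, ‖u x‖ ^ 2 ≤ 2 * ‖u y‖ ^ 2 + 2 * ((d - c) * A) := by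
    intro y hy
    have e : u x - u y = ∫ s in y..x, u' s := by
      rw [hF x, hF y, ← intervalIntegral.integral_interval_sub_left (hi 0 x) (hi 0 y)]; ring
    have n1 : ‖u x - u y‖ ≤ S := by
      rw [e]
      refine (intervalIntegral.norm_integral_le_integral_norm_uIoc).trans ?_
      rw [hS, intervalIntegral.integral_of_le hcd.le]
      refine setIntegral_mono_set (hi c d).norm.1 (Filter.Eventually.of_forall fun s => norm_nonneg _) ?_
      apply HasSubset.Subset.eventuallyLE
      exact Set.Ioc_subset_Ioc (le_min hy.1 hx.1) (max_le hy.2 hx.2)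
    have n2 : ‖u x‖ ≤ ‖u y‖ + S := by
      have := norm_add_le (u y) (u x - u y)
      rw [add_sub_cancel] at this
      linarith
    have n3 : ‖u x‖ ^ 2 ≤ (‖u y‖ + S) ^ 2 := pow_le_pow_left₀ (norm_nonneg _) n2 2
    nlinarith [sq_nonneg (‖u y‖ - S)]
  have := intervalIntegral.integral_mono_on hcd.le (by simp)
    ((hB.const_mul 2).add (by simp : IntervalIntegrable (fun _ => 2 * ((d - c) * A)) volume c d)) hpt
  rw [intervalIntegral.integral_add (hB.const_mul 2) (by simp),
    intervalIntegral.integral_const_mul] at this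
  simp only [intervalIntegral.integral_const, smul_eq_mul] at this
  linarith

lemma mono_sub {f : ℝ → ℝ} (hf : Integrable f volume) (h0 : ∀ x, 0 ≤ f x) (a b c d : ℝ)
    (hcd : c ≤ d) (hac : a ≤ c) (hdb : d ≤ b) :
    ∫ s in c..d, f s ≤ ∫ s in a..b, f s :=
  intervalIntegral.integral_mono_interval hac hcd hdb (Filter.Eventually.of_forall h0)
    hf.intervalIntegrable

lemma aux_sup2 {u u' : ℝ → ℂ} (hu : InH1 u u') (a δ x : ℝ) (hδ : 0 < δ) (hδ1 : δ ≤ 1)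
    (hx : x ∈ Set.Icc a (a + 1)) :
    ‖u x‖ ^ 2 ≤ 4 / δ * (∫ s in a..(a + 1), ‖u s‖ ^ 2)
      + δ * ∫ s in a..(a + 1), ‖u' s‖ ^ 2 := by
  have iu := sq_int hu.2.2.1
  have iu' := sq_int hu.2.2.2
  obtain ⟨c, hac, hcb, hxc⟩ : ∃ c, a ≤ c ∧ c + δ / 2 ≤ a + 1 ∧ x ∈ Set.Icc c (c + δ / 2) := by
    rcases le_total x (a + 1 / 2) with h | h
    · exact ⟨x, hx.1, by linarith, le_rfl, by linarith⟩
    · exact ⟨x - δ / 2, by linarith, by linarith [hx.2], by linarith, by linarith⟩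
  have h := aux_sup hu c (c + δ / 2) x (by linarith) hxc
  have h1 := mono_sub iu (fun x => by positivity) a (a + 1) c (c + δ / 2) (by linarith) hac hcb
  have h2 := mono_sub iu' (fun x => by positivity) a (a + 1) c (c + δ / 2) (by linarith) hac hcb
  rw [add_sub_cancel_left] at h
  set B := ∫ s in a..(a + 1), ‖u s‖ ^ 2
  set A := ∫ s in a..(a + 1), ‖u' s‖ ^ 2
  have h3 : δ / 2 * ‖u x‖ ^ 2 ≤ 2 * B + 2 * (δ / 2) ^ 2 * A :=
    h.trans (by gcongr)
  have h4 : δ / 2 * (4 / δ * B + δ * A) = 2 * B + 2 * (δ / 2) ^ 2 * A := by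
    field_simp; ring
  rw [← h4] at h3
  exact le_of_mul_le_mul_left h3 (by positivity)

lemma aux_sum (F : ℝ → ℂ) (g : ℝ → ℝ) (hg : Integrable g volume) (hg0 : ∀ x, 0 ≤ g x)
    (h : Integrable F volume → ∀ a : ℝ, ∫ s in a..(a + 1), ‖F s‖ ≤ ∫ s in a..(a + 1), g s) :
    ‖∫ x, F x‖ ≤ ∫ x, g x := by
  by_cases hF : Integrable F volume
  · refine (norm_integral_le_integral_norm _).trans ?_
    have s1 := hF.norm.hasSum_intervalIntegral 0
    have s2 := hg.hasSum_intervalIntegral 0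
    exact hasSum_le (fun n => h hF _) s1 s2
  · rw [integral_undef hF, norm_zero]
    exact integral_nonneg hg0

lemma aux_tau {τ u u' : ℝ → ℂ} (hτ : InStepL1 τ) (hu : InH1 u u')
    (ε : ℝ) (hε : 0 < ε) (hε1 : ε ≤ 1) :
    ‖∫ x : ℝ, τ x * (‖u x‖ : ℂ) ^ 2‖ ≤ stepL1 τ * (4 / ε * (∫ x, ‖u x‖ ^ 2)
      + ε * ∫ x, ‖u' x‖ ^ 2) := by
  have iu := sq_int hu.2.2.1
  have iu' := sq_int hu.2.2.2
  have hT : ∀ t : ℝ, ∫ s in t..(t + 1), ‖τ s‖ ≤ stepL1 τ := fun t => le_ciSup hτ.2 t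
  have hT0 : 0 ≤ stepL1 τ :=
    (intervalIntegral.integral_nonneg (by linarith) (fun s _ => norm_nonneg (τ s))).trans (hT 0)
  have key := aux_sum (fun x => τ x * (‖u x‖ : ℂ) ^ 2)
    (fun x => stepL1 τ * (4 / ε * ‖u x‖ ^ 2 + ε * ‖u' x‖ ^ 2))
    (((iu.const_mul _).add (iu'.const_mul _)).const_mul _) (fun x => by positivity) ?_
  · rwa [integral_const_mul, integral_add (iu.const_mul _) (iu'.const_mul _), integral_const_mul,
      integral_const_mul] at key
  intro hF a
  rw [intervalIntegral.integral_const_mul, intervalIntegral.integral_add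
    (iu.const_mul _).intervalIntegrable (iu'.const_mul _).intervalIntegrable,
    intervalIntegral.integral_const_mul, intervalIntegral.integral_const_mul]
  have hs := fun x hx => aux_sup2 hu a ε x hε hε1 hx
  set M := 4 / ε * (∫ s in a..(a + 1), ‖u s‖ ^ 2) + ε * ∫ s in a..(a + 1), ‖u' s‖ ^ 2
  have hM : 0 ≤ M := (sq_nonneg _).trans (hs a ⟨le_rfl, by linarith⟩)
  have hi : IntervalIntegrable τ volume a (a + 1) :=
    (hτ.1.integrableOn_isCompact isCompact_uIcc).intervalIntegrable
  have := intervalIntegral.integral_mono_on (by linarith : a ≤ a + 1) hF.norm.intervalIntegrable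
    (hi.norm.mul_const M) (fun x hx => by
      simp only [norm_mul, norm_pow, Complex.norm_real, norm_norm]
      exact mul_le_mul_of_nonneg_left (hs x hx) (norm_nonneg _))
  rw [intervalIntegral.integral_mul_const] at this
  exact this.trans (mul_le_mul_of_nonneg_right (hT a) hM)

lemma aux_Q {Q u u' : ℝ → ℂ} (hQ : InStepL2 Q) (hu : InH1 u u')
    (ε : ℝ) (hε : 0 < ε) (hε1 : ε ≤ 1) (q : ℝ) (hq : stepL2 Q < q) :
    ‖∫ x : ℝ, Q x * ((starRingEnd ℂ) (u' x) * u x + (starRingEnd ℂ) (u x) * u' x)‖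
      ≤ q * (4 * ε⁻¹ ^ 3 * (∫ x, ‖u x‖ ^ 2) + 2 * ε * ∫ x, ‖u' x‖ ^ 2) := by
  have iu := sq_int hu.2.2.1
  have iu' := sq_int hu.2.2.2
  have hq0 : 0 < q := (Real.sqrt_nonneg _).trans_lt hq
  have hT : ∀ t : ℝ, ∫ s in t..(t + 1), ‖Q s‖ ^ 2 ≤ q ^ 2 := fun t =>
    (le_ciSup hQ.2.2 t).trans ((Real.sqrt_lt' hq0).1 hq).le
  have key := aux_sum
    (fun x => Q x * ((starRingEnd ℂ) (u' x) * u x + (starRingEnd ℂ) (u x) * u' x))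
    (fun x => q * (4 * ε⁻¹ ^ 3 * ‖u x‖ ^ 2 + 2 * ε * ‖u' x‖ ^ 2))
    (((iu.const_mul _).add (iu'.const_mul _)).const_mul _) (fun x => by positivity) ?_
  · rwa [integral_const_mul, integral_add (iu.const_mul _) (iu'.const_mul _), integral_const_mul,
      integral_const_mul] at key
  intro hF a
  rw [intervalIntegral.integral_const_mul, intervalIntegral.integral_add
    (iu.const_mul _).intervalIntegrable (iu'.const_mul _).intervalIntegrable,
    intervalIntegral.integral_const_mul, intervalIntegral.integral_const_mul]
  have hs := fun x hx => aux_sup2 hu a (ε ^ 2) x (by positivity) (pow_le_one₀ hε.le hε1) hx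
  set B := ∫ s in a..(a + 1), ‖u s‖ ^ 2
  set A := ∫ s in a..(a + 1), ‖u' s‖ ^ 2 with hA
  set M := 4 / ε ^ 2 * B + ε ^ 2 * A with hMd
  have hM : 0 ≤ M := (sq_nonneg _).trans (hs a ⟨le_rfl, by linarith⟩)
  have hi : IntervalIntegrable (fun s => ‖Q s‖ ^ 2) volume a (a + 1) :=
    (hQ.2.1.integrableOn_isCompact isCompact_uIcc).intervalIntegrable
  have hA' : IntervalIntegrable (fun s => ‖u' s‖ ^ 2) volume a (a + 1) := iu'.intervalIntegrable
  have := intervalIntegral.integral_mono_on (by linarith : a ≤ a + 1) hF.norm.intervalIntegrable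
    ((hA'.const_mul (q * ε)).add (hi.mul_const (M / (q * ε)))) (fun x hx => by
      have n1 : ‖Q x * ((starRingEnd ℂ) (u' x) * u x + (starRingEnd ℂ) (u x) * u' x)‖
          ≤ ‖Q x‖ * (‖u' x‖ * ‖u x‖ + ‖u x‖ * ‖u' x‖) := by
        rw [norm_mul]
        gcongr
        refine (norm_add_le _ _).trans ?_
        simp
      refine n1.trans ?_
      have n2 : ‖Q x‖ ^ 2 * (‖u x‖ ^ 2 / (q * ε)) ≤ ‖Q x‖ ^ 2 * (M / (q * ε)) := by
        gcongr
        exact hs x hx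
      refine le_trans ?_ (add_le_add_right n2 _)
      have n3 : q * ε * ‖u' x‖ ^ 2 + ‖Q x‖ ^ 2 * (‖u x‖ ^ 2 / (q * ε))
          - ‖Q x‖ * (‖u' x‖ * ‖u x‖ + ‖u x‖ * ‖u' x‖)
          = (q * ε * ‖u' x‖ - ‖Q x‖ * ‖u x‖) ^ 2 / (q * ε) := by
        field_simp; ring
      have n4 : 0 ≤ (q * ε * ‖u' x‖ - ‖Q x‖ * ‖u x‖) ^ 2 / (q * ε) := by positivity
      linarith)
  rw [intervalIntegral.integral_add (hA'.const_mul _) (hi.mul_const _),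
    intervalIntegral.integral_mul_const, intervalIntegral.integral_const_mul, ← hA] at this
  refine this.trans ?_
  have h5 : (∫ s in a..(a + 1), ‖Q s‖ ^ 2) * (M / (q * ε)) ≤ q ^ 2 * (M / (q * ε)) := by
    gcongr
    exact hT a
  have h6 : q * ε * A + q ^ 2 * (M / (q * ε)) = q * (4 * ε⁻¹ ^ 3 * B + 2 * ε * A) := by
    rw [hMd]; field_simp; ring
  linarith

/-- Lower bound for the real part of the form `t[u]`:
`Re t[u] ≥ (1 - Kε)‖u'‖² - 4Kε⁻³‖u‖²` for all `ε ∈ (0,1]`. -/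
theorem re_tform_lower_bound (Q τ u u' : ℝ → ℂ)
    (hQ : InStepL2 Q) (hτ : InStepL1 τ) (hu : InH1 u u')
    (ε : ℝ) (hε : 0 < ε) (hε1 : ε ≤ 1) :
    (1 - Kc Q τ * ε) * (∫ x : ℝ, ‖u' x‖ ^ 2) - 4 * Kc Q τ * ε⁻¹ ^ 3 * (∫ x : ℝ, ‖u x‖ ^ 2)
      ≤ (tform Q τ u u').re := by
  have iu0 : 0 ≤ ∫ x : ℝ, ‖u x‖ ^ 2 := integral_nonneg fun x => sq_nonneg _
  have iu0' : 0 ≤ ∫ x : ℝ, ‖u' x‖ ^ 2 := integral_nonneg fun x => sq_nonneg _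
  have h1 := aux_tau hτ hu ε hε hε1
  have h2 : ‖∫ x : ℝ, Q x * ((starRingEnd ℂ) (u' x) * u x + (starRingEnd ℂ) (u x) * u' x)‖
      ≤ stepL2 Q * (4 * ε⁻¹ ^ 3 * (∫ x, ‖u x‖ ^ 2) + 2 * ε * ∫ x, ‖u' x‖ ^ 2) := by
    refine ge_of_tendsto (x := nhdsWithin (stepL2 Q) (Set.Ioi (stepL2 Q)))
      ((Filter.tendsto_id.mul_const _).mono_left nhdsWithin_le_nhds) ?_
    filter_upwards [self_mem_nhdsWithin] with q hq
    exact aux_Q hQ hu ε hε hε1 q hq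
  have hq0 : 0 ≤ stepL2 Q := Real.sqrt_nonneg _
  have hT0 : 0 ≤ stepL1 τ :=
    (intervalIntegral.integral_nonneg (by linarith) (fun s _ => norm_nonneg (τ s))).trans
      (le_ciSup hτ.2 0)
  have e1 := (Complex.abs_re_le_norm _).trans h1
  have e2 := (Complex.abs_re_le_norm _).trans h2
  have e1' := (abs_le.1 e1).1
  have e2' := (abs_le.1 e2).2
  unfold tform Kc
  rw [Complex.add_re, Complex.sub_re, Complex.ofReal_re]
  set B := ∫ x : ℝ, ‖u x‖ ^ 2
  set A := ∫ x : ℝ, ‖u' x‖ ^ 2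
  have h3 : 4 / ε ≤ 4 * ε⁻¹ ^ 3 := by
    rw [div_eq_mul_inv]
    have : 1 ≤ ε⁻¹ := (one_le_inv₀ hε).2 hε1
    have := le_self_pow₀ this (by norm_num : 3 ≠ 0)
    linarith
  have h4 : stepL1 τ * (4 / ε * B + ε * A) ≤ stepL1 τ * (8 * ε⁻¹ ^ 3 * B + 2 * ε * A) := by
    have : 0 ≤ ε⁻¹ ^ 3 := by positivity
    gcongr
    · linarith
    · linarith
  have h5 : 0 ≤ stepL2 Q * (ε⁻¹ ^ 3 * B) := by positivity
  linarith
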